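/- Let X be a compact metric space, φ : ℝ × X → X a continuous flow, and f ∈ C(X, ℝ); assume the topological pressure P(g) is finite for every g ∈ C(X, ℝ). Fix ε > 0 and let (t_n)_{n≥0} be times with t_n ≥ n and (E_n)_{n≥0} finite nonempty (t_n, ε)-separated subsets of X such that liminf_{n→∞} (1/t_n) log Σ_{x∈E_n} exp(∫₀^{t_n} f(φ^s x) ds) ≥ P(f). Let β_n be the atomic probability measure on X with β_n({x}) = exp(∫₀^{t_n} f(φ^s x) ds) / Σ_{y∈E_n} exp(∫₀^{t_n} f(φ^s y) ds) for x ∈ E_n, and let ν_n := β_n ∘ δ_{t_n}^{-1} be the induced probability measure on 𝒫(X). Then for every closed subset K of 𝒫(X) one has limsup_{n→∞} (1/t_n) log ν_n(K) ≤ − inf { J_f(m) : m ∈ K }. -/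

import Mathlib

open MeasureTheory Filter Topology ENNReal NNReal

/-- `E` is a `(t, ε)`-separated set for the flow `φ`: distinct points of `E` are moved at
distance `> ε` apart at some time `s ∈ [0, t]`. -/
def IsSeparatedSet {X : Type*} [MetricSpace X] (φ : ℝ → C(X, X)) (t ε : ℝ) (E : Set X) : Prop :=
  ∀ x ∈ E, ∀ y ∈ E, x ≠ y → ∃ s ∈ Set.Icc (0 : ℝ) t, ε < dist (φ s x) (φ s y)

/-- The topological pressure of a continuous function `f` for the flow `φ`, with values in
`[-∞, ∞]`. -/
noncomputable def pressure {X : Type*} [MetricSpace X] (φ : ℝ → C(X, X)) (f : C(X, ℝ)) : EReal :=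
  ⨆ (ε : ℝ) (_ : 0 < ε),
    Filter.limsup (fun t : ℝ =>
      ((1 / t : ℝ) : EReal) *
        ENNReal.log (⨆ (E : Finset X) (_ : IsSeparatedSet φ t ε (E : Set X)),
          ENNReal.ofReal (∑ x ∈ E, Real.exp (∫ s in (0 : ℝ)..t, f (φ s x))))) Filter.atTop

/-- The rate functional `J_f(μ) = sup_ω (∫ ω dμ - Q_f(ω))` where
`Q_f(ω) = P(f + ω) - P(f)`. -/
noncomputable def Jfun {X : Type*} [MetricSpace X] [MeasurableSpace X]
    (φ : ℝ → C(X, X)) (f : C(X, ℝ)) (μ : ProbabilityMeasure X) : EReal :=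
  ⨆ ω : C(X, ℝ), (((∫ x, ω x ∂(μ : Measure X)) : ℝ) : EReal) -
    (pressure φ (f + ω) - pressure φ f)

/-- The empirical measure `δ_t(x)` of the flow `φ`: the normalized occupation measure of
the orbit segment `{φ^s x : s ∈ (0, t]}`, so that
`∫ ω dδ_t(x) = (1/t) ∫₀ᵗ ω(φ^s x) ds`. -/
noncomputable def empDist {X : Type*} [MetricSpace X] [MeasurableSpace X]
    (φ : ℝ → C(X, X)) (t : ℝ) (x : X) : Measure X :=
  (ENNReal.ofReal t)⁻¹ • Measure.map (fun s => φ s x) (volume.restrict (Set.Ioc 0 t))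

/-!
Chebyshev's inequality for `exp (t ∫ ω dμ)` bounds `ν_n {μ | c < ∫ ω dμ}` by `exp (-t c)` times the
exponential moment of `ν_n` in the direction `ω`. This moment is a quotient of partition sums, namely
the one of `f + ω` by the one of `f`, so its growth rate is at most `P(f + ω) - P(f) = Q_f(ω)`. If
`a < J_f(μ)`, a suitable `ω` thus yields a neighbourhood of `μ` of mass at most about `exp (-t a)`,
and the compact set `K` is covered by finitely many such neighbourhoods.
-/

section ExpGrowthRate

variable {ι : Type*} {l : Filter ι} {t : ι → ℝ} {u v : ι → ℝ≥0∞}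

/-- The upper exponential growth rate `limsup (1 / t) log u` of `u` at speed `t` along `l`. -/
noncomputable def expGrowthRate (l : Filter ι) (t : ι → ℝ) (u : ι → ℝ≥0∞) : EReal :=
  limsup (fun i => ((1 / t i : ℝ) : EReal) * ENNReal.log (u i)) l

lemma one_div_mul_log_ofReal_exp {s : ℝ} (hs : 0 < s) (c : ℝ) :
    ((1 / s : ℝ) : EReal) * ENNReal.log (ENNReal.ofReal (Real.exp (s * c))) = c := by
  rw [ENNReal.log_ofReal_of_pos (Real.exp_pos _), Real.log_exp, ← EReal.coe_mul, one_div,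
    inv_mul_cancel_left₀ hs.ne']

lemma strictMono_one_div_mul_log {s : ℝ} (hs : 0 < s) :
    StrictMono fun y : ℝ≥0∞ => ((1 / s : ℝ) : EReal) * ENNReal.log y := by
  simp only [one_div, EReal.coe_inv, ← EReal.div_eq_inv_mul]
  exact (EReal.strictMono_div_right_of_pos (EReal.coe_pos.2 hs) (EReal.coe_ne_top s)).comp
    ENNReal.log_strictMono

lemma expGrowthRate_mono (ht : ∀ᶠ i in l, 0 < t i) (h : u ≤ᶠ[l] v) :
    expGrowthRate l t u ≤ expGrowthRate l t v := by
  refine limsup_le_limsup ?_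
  filter_upwards [ht, h] with i hti hi using (strictMono_one_div_mul_log hti).monotone hi

lemma expGrowthRate_le_of_eventually_le_exp (ht : ∀ᶠ i in l, 0 < t i) {c : ℝ}
    (h : ∀ᶠ i in l, u i ≤ ENNReal.ofReal (Real.exp (t i * c))) : expGrowthRate l t u ≤ c := by
  refine limsup_le_of_le (by isBoundedDefault) ?_
  filter_upwards [ht, h] with i hti hi
  exact ((strictMono_one_div_mul_log hti).monotone hi).trans_eq (one_div_mul_log_ofReal_exp hti c)

lemma eventually_le_exp_of_expGrowthRate_lt (ht : ∀ᶠ i in l, 0 < t i) {c : ℝ}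
    (h : expGrowthRate l t u < c) : ∀ᶠ i in l, u i ≤ ENNReal.ofReal (Real.exp (t i * c)) := by
  filter_upwards [ht, eventually_lt_of_limsup_lt h] with i hti hi
  rw [← one_div_mul_log_ofReal_exp hti c] at hi
  exact ((strictMono_one_div_mul_log hti).lt_iff_lt.1 hi).le

lemma eventually_exp_le_of_lt_liminf (ht : ∀ᶠ i in l, 0 < t i) {c : ℝ}
    (h : (c : EReal) < liminf (fun i => ((1 / t i : ℝ) : EReal) * ENNReal.log (u i)) l) :
    ∀ᶠ i in l, ENNReal.ofReal (Real.exp (t i * c)) ≤ u i := by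
  filter_upwards [ht, eventually_lt_of_lt_liminf h] with i hti hi
  rw [← one_div_mul_log_ofReal_exp hti c] at hi
  exact ((strictMono_one_div_mul_log hti).lt_iff_lt.1 hi).le

lemma expGrowthRate_zero (ht : ∀ᶠ i in l, 0 < t i) : expGrowthRate l t 0 = ⊥ := by
  refine (EReal.eq_bot_iff_forall_lt _).2 fun c => ?_
  refine (expGrowthRate_le_of_eventually_le_exp (c := c - 1) ht ?_).trans_lt ?_
  · exact .of_forall fun _ => zero_le
  · exact_mod_cast sub_one_lt c

lemma expGrowthRate_add_le (ht : Tendsto t l atTop) :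
    expGrowthRate l t (u + v) ≤ max (expGrowthRate l t u) (expGrowthRate l t v) := by
  have ht0 := ht.eventually_gt_atTop 0
  refine EReal.le_of_forall_lt_iff_le.1 fun c hc => ?_
  obtain ⟨b, hb, hbc⟩ := EReal.lt_iff_exists_real_btwn.1 hc
  obtain ⟨hub, hvb⟩ := max_lt_iff.1 hb
  have two_le : ∀ᶠ i in l, 2 ≤ Real.exp (t i * (c - b)) :=
    (Real.tendsto_exp_atTop.comp (ht.atTop_mul_const
      (sub_pos.2 (EReal.coe_lt_coe_iff.1 hbc)))).eventually_ge_atTop 2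
  refine expGrowthRate_le_of_eventually_le_exp ht0 ?_
  filter_upwards [eventually_le_exp_of_expGrowthRate_lt ht0 hub,
    eventually_le_exp_of_expGrowthRate_lt ht0 hvb, two_le] with i hu hv h2
  calc u i + v i
      ≤ ENNReal.ofReal (Real.exp (t i * b)) + ENNReal.ofReal (Real.exp (t i * b)) := by gcongr
    _ = ENNReal.ofReal (2 * Real.exp (t i * b)) := by
        rw [← ENNReal.ofReal_add (Real.exp_nonneg _) (Real.exp_nonneg _), two_mul]
    _ ≤ ENNReal.ofReal (Real.exp (t i * (c - b)) * Real.exp (t i * b)) := by gcongr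
    _ = ENNReal.ofReal (Real.exp (t i * c)) := by rw [← Real.exp_add]; ring_nf

lemma expGrowthRate_div_le (ht : ∀ᶠ i in l, 0 < t i) {p : ℝ}
    (hv : (p : EReal) ≤ liminf (fun i => ((1 / t i : ℝ) : EReal) * ENNReal.log (v i)) l) :
    expGrowthRate l t (u / v) ≤ expGrowthRate l t u - p := by
  refine EReal.le_of_forall_lt_iff_le.1 fun c hc => ?_
  have hup : expGrowthRate l t u < ((c + p : ℝ) : EReal) := by
    simpa [EReal.sub_lt_iff] using hc
  obtain ⟨b, hub, hbp⟩ := EReal.lt_iff_exists_real_btwn.1 hup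
  have hbc : ((b - c : ℝ) : EReal) < p :=
    EReal.coe_lt_coe_iff.2 (sub_lt_iff_lt_add'.2 (EReal.coe_lt_coe_iff.1 hbp))
  refine expGrowthRate_le_of_eventually_le_exp ht ?_
  filter_upwards [eventually_le_exp_of_expGrowthRate_lt ht hub,
    eventually_exp_le_of_lt_liminf ht (hbc.trans_le hv)] with i hu hv
  calc u i / v i
      ≤ ENNReal.ofReal (Real.exp (t i * b)) / ENNReal.ofReal (Real.exp (t i * (b - c))) :=
        ENNReal.div_le_div hu hv
    _ = ENNReal.ofReal (Real.exp (t i * c)) := by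
        rw [← ENNReal.ofReal_div_of_pos (Real.exp_pos _), ← Real.exp_sub]; ring_nf

end ExpGrowthRate

section CompactUpperBound

variable {ι Y W : Type*} {l : Filter ι} {t : ι → ℝ} [MeasurableSpace Y] {ν : ι → Measure Y}

lemma expGrowthRate_measure_superlevel_le (ht : ∀ᶠ i in l, 0 < t i) {F : Y → ℝ}
    (hF : Measurable F) {a b : ℝ}
    (hb : expGrowthRate l t (fun i => ∫⁻ y, ENNReal.ofReal (Real.exp (t i * F y)) ∂ν i) < b) :
    expGrowthRate l t (fun i => ν i {y | a + b < F y}) ≤ ((-a : ℝ) : EReal) := by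
  refine expGrowthRate_le_of_eventually_le_exp ht ?_
  filter_upwards [ht, eventually_le_exp_of_expGrowthRate_lt ht hb] with i hti hi
  have superlevel_subset : {y | a + b < F y} ⊆ {y | ENNReal.ofReal (Real.exp (t i * (a + b))) ≤
      ENNReal.ofReal (Real.exp (t i * F y))} := fun y hy =>
    ENNReal.ofReal_le_ofReal (Real.exp_le_exp.2 (mul_le_mul_of_nonneg_left hy.le hti.le))
  calc ν i {y | a + b < F y}
      ≤ (∫⁻ y, ENNReal.ofReal (Real.exp (t i * F y)) ∂ν i) /
          ENNReal.ofReal (Real.exp (t i * (a + b))) :=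
        (measure_mono superlevel_subset).trans (meas_ge_le_lintegral_div (by fun_prop)
          (by simp [Real.exp_pos]) ENNReal.ofReal_ne_top)
    _ ≤ ENNReal.ofReal (Real.exp (t i * b)) / ENNReal.ofReal (Real.exp (t i * (a + b))) := by
        gcongr
    _ = ENNReal.ofReal (Real.exp (t i * -a)) := by
        rw [← ENNReal.ofReal_div_of_pos (Real.exp_pos _), ← Real.exp_sub]; ring_nf

theorem expGrowthRate_measure_le_of_isCompact [TopologicalSpace Y] [OpensMeasurableSpace Y]
    (ht : Tendsto t l atTop) {F : W → Y → ℝ} (hF : ∀ ω, LowerSemicontinuous (F ω)) {Λ : W → EReal}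
    (hΛ : ∀ ω, expGrowthRate l t
      (fun i => ∫⁻ y, ENNReal.ofReal (Real.exp (t i * F ω y)) ∂ν i) ≤ Λ ω)
    {K : Set Y} (hK : IsCompact K) :
    expGrowthRate l t (fun i => ν i K) ≤ -⨅ y ∈ K, ⨆ ω, (F ω y : EReal) - Λ ω := by
  have ht0 := ht.eventually_gt_atTop 0
  refine EReal.le_neg_of_le_neg (EReal.ge_of_forall_gt_iff_ge.1 fun a ha =>
    EReal.le_neg_of_le_neg ?_)
  rw [← EReal.coe_neg]
  refine hK.induction_on (p := fun s => expGrowthRate l t (fun i => ν i s) ≤ ((-a : ℝ) : EReal))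
    ?empty (fun s s' hss' hs' => ?mono) (fun s s' hs hs' => ?union) (fun y hy => ?nhds)
  case empty =>
    simp only [measure_empty]
    exact (expGrowthRate_zero ht0).trans_le bot_le
  case mono => exact (expGrowthRate_mono ht0 (.of_forall fun i => measure_mono hss')).trans hs'
  case union =>
    exact (expGrowthRate_mono ht0 (.of_forall fun i => measure_union_le s s')).trans
      ((expGrowthRate_add_le ht).trans (max_le hs hs'))
  case nhds =>
    obtain ⟨ω, hω⟩ := lt_iSup_iff.1 (ha.trans_le (iInf₂_le y hy))
    have hΛ_lt : Λ ω < ((F ω y - a : ℝ) : EReal) := by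
      rwa [EReal.coe_sub, EReal.lt_sub_iff_add_lt (by simp) (by simp), add_comm,
        ← EReal.lt_sub_iff_add_lt (by simp) (by simp)]
    obtain ⟨b, hΛb, hbF⟩ := EReal.lt_iff_exists_real_btwn.1 hΛ_lt
    refine ⟨{z | a + b < F ω z}, mem_nhdsWithin_of_mem_nhds ?_,
      expGrowthRate_measure_superlevel_le ht0 (hF ω).measurable ((hΛ ω).trans_lt hΛb)⟩
    exact hF ω y _ (lt_sub_iff_add_lt'.1 (EReal.coe_lt_coe_iff.1 hbF))

end CompactUpperBound

section PartitionSum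

variable {X : Type*} [TopologicalSpace X] (φ : ℝ → C(X, X))

/-- The integral `∫₀ᵗ g(φ^s x) ds` of `g` along the orbit segment of length `t` starting at `x`. -/
noncomputable def birkhoffIntegral (g : C(X, ℝ)) (t : ℝ) (x : X) : ℝ :=
  ∫ s in (0 : ℝ)..t, g (φ s x)

/-- The partition sum `Σ_{x ∈ E} exp ∫₀ᵗ g(φ^s x) ds`. -/
noncomputable def partitionSum (g : C(X, ℝ)) (t : ℝ) (E : Finset X) : ℝ :=
  ∑ x ∈ E, Real.exp (birkhoffIntegral φ g t x)

/-- The probability measure `β` on the finite set `E` with masses proportional to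
`exp ∫₀ᵗ f(φ^s x) ds`. For empty `E` it is the zero measure. -/
noncomputable def gibbsMeasure [MeasurableSpace X] (f : C(X, ℝ)) (t : ℝ) (E : Finset X) :
    Measure X :=
  (ENNReal.ofReal (partitionSum φ f t E))⁻¹ •
    ∑ x ∈ E, ENNReal.ofReal (Real.exp (birkhoffIntegral φ f t x)) • Measure.dirac x

lemma log_ofReal_partitionSum (g : C(X, ℝ)) (t : ℝ) {E : Finset X} (hE : E.Nonempty) :
    ENNReal.log (ENNReal.ofReal (partitionSum φ g t E)) = Real.log (partitionSum φ g t E) :=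
  ENNReal.log_ofReal_of_pos (Finset.sum_pos (fun _ _ => Real.exp_pos _) hE)

variable {φ}

lemma birkhoffIntegral_add (hφ : Continuous fun p : ℝ × X => φ p.1 p.2)
    (f g : C(X, ℝ)) (t : ℝ) (x : X) :
    birkhoffIntegral φ (f + g) t x = birkhoffIntegral φ f t x + birkhoffIntegral φ g t x := by
  have hx : Continuous fun s => φ s x := hφ.comp (.prodMk_left x)
  exact intervalIntegral.integral_add ((f.continuous.comp hx).intervalIntegrable _ _)
    ((g.continuous.comp hx).intervalIntegrable _ _)

end PartitionSum

lemma continuous_integral_continuousMap {X : Type*} [TopologicalSpace X] [CompactSpace X]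
    [MeasurableSpace X] [OpensMeasurableSpace X] (ω : C(X, ℝ)) :
    Continuous fun μ : ProbabilityMeasure X => ∫ x, ω x ∂(μ : Measure X) :=
  ProbabilityMeasure.continuous_integral_boundedContinuousFunction (.mkOfCompact ω)

section Flow

variable {X : Type*} [MetricSpace X] {φ : ℝ → C(X, X)}

lemma expGrowthRate_partitionSum_le_pressure {ι : Type*} {l : Filter ι} {t : ι → ℝ}
    (ht : Tendsto t l atTop) {ε : ℝ} (hε : 0 < ε) {E : ι → Finset X}
    (hE : ∀ i, IsSeparatedSet φ (t i) ε (E i : Set X)) (g : C(X, ℝ)) :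
    expGrowthRate l t (fun i => ENNReal.ofReal (partitionSum φ g (t i) (E i))) ≤
      pressure φ g := by
  let Z : ℝ → ℝ≥0∞ := fun s =>
    ⨆ (A : Finset X) (_ : IsSeparatedSet φ s ε (A : Set X)), ENNReal.ofReal (partitionSum φ g s A)
  calc expGrowthRate l t (fun i => ENNReal.ofReal (partitionSum φ g (t i) (E i)))
      ≤ expGrowthRate l t (Z ∘ t) :=
        expGrowthRate_mono (ht.eventually_gt_atTop 0)
          (.of_forall fun i => le_iSup₂_of_le (E i) (hE i) le_rfl)
    _ = expGrowthRate (map t l) id Z := rfl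
    _ ≤ expGrowthRate atTop id Z := limsup_le_limsup_of_le ht
    _ ≤ pressure φ g := le_iSup₂_of_le ε hε le_rfl

variable [MeasurableSpace X] [BorelSpace X]

lemma mul_integral_empDist (hφ : Continuous fun p : ℝ × X => φ p.1 p.2) {t : ℝ} (ht : 0 < t)
    (ω : C(X, ℝ)) (x : X) : t * ∫ y, ω y ∂empDist φ t x = birkhoffIntegral φ ω t x := by
  have hx : Continuous fun s => φ s x := hφ.comp (.prodMk_left x)
  rw [empDist, birkhoffIntegral, integral_smul_measure,
    integral_map hx.aemeasurable ω.continuous.aestronglyMeasurable,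
    intervalIntegral.integral_of_le ht.le, ENNReal.toReal_inv, ENNReal.toReal_ofReal ht.le,
    smul_eq_mul, mul_inv_cancel_left₀ ht.ne']

variable [CompactSpace X] [MeasurableSpace (ProbabilityMeasure X)]
  [OpensMeasurableSpace (ProbabilityMeasure X)]

lemma lintegral_exp_map_gibbsMeasure (hφ : Continuous fun p : ℝ × X => φ p.1 p.2) {t : ℝ}
    (ht : 0 < t) {δ : X → ProbabilityMeasure X} (hδ : ∀ x, (δ x : Measure X) = empDist φ t x)
    (hδmeas : Measurable δ) (f ω : C(X, ℝ)) (E : Finset X) :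
    ∫⁻ μ, ENNReal.ofReal (Real.exp (t * ∫ x, ω x ∂(μ : Measure X))) ∂(gibbsMeasure φ f t E).map δ =
      ENNReal.ofReal (partitionSum φ (f + ω) t E) / ENNReal.ofReal (partitionSum φ f t E) := by
  have moment_measurable : Measurable fun μ : ProbabilityMeasure X =>
      ENNReal.ofReal (Real.exp (t * ∫ x, ω x ∂(μ : Measure X))) :=
    ((continuous_integral_continuousMap ω).measurable.const_mul t).exp.ennreal_ofReal
  have weight_mul_moment : ∀ x, ENNReal.ofReal (Real.exp (birkhoffIntegral φ f t x)) *
      ENNReal.ofReal (Real.exp (t * ∫ y, ω y ∂(δ x : Measure X))) =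
        ENNReal.ofReal (Real.exp (birkhoffIntegral φ (f + ω) t x)) := fun x => by
    rw [hδ, mul_integral_empDist hφ ht, ← ENNReal.ofReal_mul (Real.exp_nonneg _), ← Real.exp_add,
      birkhoffIntegral_add hφ]
  have lintegral_moment_dirac : ∀ x, ∫⁻ y, ENNReal.ofReal (Real.exp
      (t * ∫ z, ω z ∂(δ y : Measure X))) ∂Measure.dirac x =
        ENNReal.ofReal (Real.exp (t * ∫ z, ω z ∂(δ x : Measure X))) := fun x =>
    lintegral_dirac' x (moment_measurable.comp hδmeas)
  rw [lintegral_map moment_measurable hδmeas, gibbsMeasure,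
    partitionSum.eq_def φ (f + ω), lintegral_smul_measure, lintegral_finsetSum_measure]
  simp only [lintegral_smul_measure, lintegral_moment_dirac, smul_eq_mul, weight_mul_moment]
  rw [← ENNReal.ofReal_sum_of_nonneg fun _ _ => Real.exp_nonneg _, mul_comm, ← div_eq_mul_inv]

theorem large_deviations_upper_bound_general (hφ : Continuous fun p : ℝ × X => φ p.1 p.2)
    {f : C(X, ℝ)} (hf : ∃ p : ℝ, pressure φ f = p) {ε : ℝ} (hε : 0 < ε) {ι : Type*} {l : Filter ι}
    {t : ι → ℝ} (ht0 : ∀ i, 0 < t i) (ht : Tendsto t l atTop) {E : ι → Finset X}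
    (hE : ∀ i, IsSeparatedSet φ (t i) ε (E i : Set X))
    (hliminf : pressure φ f ≤ liminf (fun i => ((1 / t i : ℝ) : EReal) *
      ENNReal.log (ENNReal.ofReal (partitionSum φ f (t i) (E i)))) l)
    {δ : ι → X → ProbabilityMeasure X} (hδ : ∀ i x, (δ i x : Measure X) = empDist φ (t i) x)
    (hδmeas : ∀ i, Measurable (δ i)) {K : Set (ProbabilityMeasure X)} (hK : IsClosed K) :
    expGrowthRate l t (fun i => (gibbsMeasure φ f (t i) (E i)).map (δ i) K) ≤
      -⨅ μ ∈ K, Jfun φ f μ := by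
  obtain ⟨p, hp⟩ := hf
  refine expGrowthRate_measure_le_of_isCompact ht
    (fun ω => (continuous_integral_continuousMap ω).lowerSemicontinuous) (fun ω => ?_) hK.isCompact
  simp only [lintegral_exp_map_gibbsMeasure hφ (ht0 _) (hδ _) (hδmeas _)]
  refine (expGrowthRate_div_le (.of_forall ht0) (hp.symm.trans_le hliminf)).trans ?_
  rw [hp]
  exact EReal.sub_le_sub (expGrowthRate_partitionSum_le_pressure ht hε hE (f + ω)) le_rfl

end Flow

/-- Let `φ` be a continuous flow on a compact metric space `X` whose
topological pressure is finite on all of `C(X,ℝ)`, and let `f ∈ C(X,ℝ)` and `ε > 0`. Let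
`t_n ≥ n` be positive times and `E_n` nonempty finite `(t_n, ε)`-separated sets with
`liminf (1/t_n) log Σ_{x∈E_n} exp ∫₀^{t_n} f(φ^s x) ds ≥ P(f)`. Let `β_n` be the atomic
probability measure on `X` giving mass proportional to `exp ∫₀^{t_n} f(φ^s x) ds` to each
`x ∈ E_n`, and let `ν_n := β_n ∘ δ_{t_n}^{-1}` be the law of the empirical measure.
Then for every closed `K ⊆ 𝒫(X)`:
`limsup (1/t_n) log ν_n(K) ≤ - inf {J_f(m) : m ∈ K}`. -/
theorem large_deviations_upper_bound
    {X : Type*} [MetricSpace X] [CompactSpace X] [MeasurableSpace X] [BorelSpace X]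
    [MeasurableSpace (ProbabilityMeasure X)] [BorelSpace (ProbabilityMeasure X)]
    (φ : ℝ → C(X, X))
    (hφcont : Continuous fun p : ℝ × X => φ p.1 p.2)
    (hφ0 : φ 0 = ContinuousMap.id X)
    (hφadd : ∀ s t : ℝ, φ (s + t) = (φ s).comp (φ t))
    (f : C(X, ℝ))
    (hfin : ∀ g : C(X, ℝ), ∃ r : ℝ, pressure φ g = (r : EReal))
    (ε : ℝ) (hε : 0 < ε)
    (t : ℕ → ℝ) (ht0 : ∀ n, 0 < t n) (htn : ∀ n : ℕ, (n : ℝ) ≤ t n)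
    (E : ℕ → Finset X) (hEne : ∀ n, (E n).Nonempty)
    (hEsep : ∀ n, IsSeparatedSet φ (t n) ε (E n : Set X))
    (hliminf : pressure φ f ≤
      Filter.liminf (fun n : ℕ =>
        ((1 / t n : ℝ) : EReal) *
          ((Real.log (∑ x ∈ E n, Real.exp (∫ s in (0 : ℝ)..t n, f (φ s x))) : ℝ) : EReal))
        Filter.atTop)
    (δPM : ℕ → X → ProbabilityMeasure X)
    (hδPM : ∀ n x, (δPM n x : Measure X) = empDist φ (t n) x)
    (hδmeas : ∀ n, Measurable (δPM n))
    (β : ℕ → Measure X)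
    (hβ : ∀ n, β n =
      (ENNReal.ofReal (∑ x ∈ E n, Real.exp (∫ s in (0 : ℝ)..t n, f (φ s x))))⁻¹ •
        ∑ x ∈ E n, ENNReal.ofReal (Real.exp (∫ s in (0 : ℝ)..t n, f (φ s x))) •
          Measure.dirac x)
    (K : Set (ProbabilityMeasure X)) (hK : IsClosed K) :
    Filter.limsup (fun n : ℕ =>
        ((1 / t n : ℝ) : EReal) * ENNReal.log (((β n).map (δPM n)) K)) Filter.atTop
      ≤ -⨅ m ∈ K, Jfun φ f m := by
  obtain rfl : β = fun n => gibbsMeasure φ f (t n) (E n) := funext hβ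
  exact large_deviations_upper_bound_general hφcont (hfin f) hε ht0
    (tendsto_atTop_mono htn tendsto_natCast_atTop_atTop) hEsep
    (by simp only [log_ofReal_partitionSum φ f _ (hEne _)]; exact hliminf) hδPM hδmeas hK
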